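/- arXiv:2202.08601 — 2 statements merged into one kernel-verified Lean document; each statement's English description precedes it below -/
import Mathlib

section
/- Let y ∈ ℂ⁶ ∖ {0} with Σ_k y_k = 0 and (Σ_k y_k²)² ≠ 4 Σ_k y_k⁴ (i.e. [y] does not lie on the Castelnuovo–Richmond quartic). Then the singular points of the cubic surface Σ₃ ∩ H_y are exactly the nodes [ε^A] with Σ_k ε^A_k y_k = 0. -/
/-!
The polar map `x ↦ (x_k² - m)_k`, with `m` the mean of the `x_k²`, sends the Segre cubic into the
Castelnuovo–Richmond quartic. Indeed, if `e₁ = e₃ = 0`, then each coordinate is a root of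
`X⁶ + e₂X⁴ + e₄X² - e₅X + e₆`. Since `m = -e₂/3`, the shifted squares `z_k = x_k² - m` satisfy
depressed cubic relations `z_k³ + p z_k + q = e₅ x_k`. Multiplying by `z_k` and summing, where
`∑ z_k = ∑ z_k x_k = 0`, gives `∑ z_k⁴ = -p ∑ z_k²`, while `∑ z_k² = -4p`.

Hence, off the quartic, `y` is not a combination of `1` and `(x_k²)`, and a singular point must
have all `x_k²` equal: it is proportional to a vector of signs. The condition `∑ x_k = 0` balances
the signs, so the point is a node.
-/

open scoped BigOperators

/-- The vector `ε^A` with coordinate `1` on `A` and `-1` off `A`. -/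
noncomputable def eps (A : Finset (Fin 6)) : Fin 6 → ℂ := fun k => if k ∈ A then 1 else -1

section PowerSums

lemma sum_antidiagonal_succ_filter_mem_Ioo {M : Type*} [AddCommMonoid M] (n : ℕ) (f : ℕ × ℕ → M) :
    ∑ a ∈ Finset.HasAntidiagonal.antidiagonal (n + 1) with a.1 ∈ Set.Ioo 0 (n + 1), f a =
      ∑ i ∈ Finset.range n, f (i + 1, n - i) := by
  rw [Finset.sum_filter, Finset.Nat.sum_antidiagonal_eq_sum_range_succ_mk, Finset.sum_range_succ,
    Finset.sum_range_succ']
  simp +contextual [Nat.add_sub_add_right, Finset.sum_ite, Finset.filter_true_of_mem]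

variable {ι R : Type*} [Fintype ι] [CommRing R]

/-- The value `e_j(x)` of the `j`-th elementary symmetric polynomial at a finite family `x`. -/
noncomputable def esymmAt (x : ι → R) (j : ℕ) : R :=
  MvPolynomial.aeval x (MvPolynomial.esymm ι R j)

lemma esymmAt_zero (x : ι → R) : esymmAt x 0 = 1 := by
  simp [esymmAt]

lemma esymmAt_one (x : ι → R) : esymmAt x 1 = ∑ k, x k := by
  simp [esymmAt]

lemma sum_pow_succ_eq_mul_esymmAt_add_sum (x : ι → R) (n : ℕ) :
    ∑ k, x k ^ (n + 1) = (-1) ^ n * (n + 1) * esymmAt x (n + 1) +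
      ∑ i ∈ Finset.range n, (-1) ^ i * esymmAt x (i + 1) * ∑ k, x k ^ (n - i) := by
  have newton := congrArg (MvPolynomial.aeval x)
    (MvPolynomial.psum_eq_mul_esymm_sub_sum ι R (n + 1) n.succ_pos)
  rw [sum_antidiagonal_succ_filter_mem_Ioo] at newton
  simpa [MvPolynomial.psum, esymmAt, pow_succ] using newton

lemma sum_sq_eq_neg_two_mul_esymmAt {x : ι → R} (h1 : ∑ k, x k = 0) :
    ∑ k, x k ^ 2 = -2 * esymmAt x 2 := by
  simpa [h1, one_add_one_eq_two] using sum_pow_succ_eq_mul_esymmAt_add_sum x 1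

lemma sum_pow_three_eq_three_mul_esymmAt {x : ι → R} (h1 : ∑ k, x k = 0) :
    ∑ k, x k ^ 3 = 3 * esymmAt x 3 := by
  simpa [Finset.sum_range_succ, esymmAt_one, h1, two_add_one_eq_three] using
    sum_pow_succ_eq_mul_esymmAt_add_sum x 2

lemma sum_pow_four_eq_esymmAt {x : ι → R} (h1 : ∑ k, x k = 0) :
    ∑ k, x k ^ 4 = 2 * esymmAt x 2 ^ 2 - 4 * esymmAt x 4 := by
  have newton := sum_pow_succ_eq_mul_esymmAt_add_sum x 3
  simp only [Finset.sum_range_succ, Finset.sum_range_zero, Nat.reduceAdd, Nat.reduceSub, pow_one,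
    esymmAt_one, h1, sum_sq_eq_neg_two_mul_esymmAt h1] at newton
  linear_combination newton

lemma sum_esymmAt_mul_pow_eq_zero (x : ι → R) (k : ι) :
    ∑ j ∈ Finset.range (Fintype.card ι + 1),
      (-1) ^ j * (esymmAt x j * x k ^ (Fintype.card ι - j)) = 0 := by
  have vieta := congrArg (Polynomial.eval (x k))
    (Multiset.prod_X_sub_X_eq_sum_esymm (Finset.univ.val.map x))
  have root : Polynomial.eval (x k) (∏ i, (Polynomial.X - Polynomial.C (x i))) = 0 := by
    rw [Polynomial.eval_prod]
    exact Finset.prod_eq_zero (Finset.mem_univ k) (by simp)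
  rw [Multiset.map_map] at vieta
  simpa [Polynomial.eval_finsetSum, esymmAt, MvPolynomial.aeval_esymm_eq_multiset_esymm] using
    vieta.symm.trans root

lemma sextic_eq_esymmAt_five_mul (hι : Fintype.card ι = 6) {x : ι → R} (h1 : ∑ k, x k = 0)
    (h3 : esymmAt x 3 = 0) (k : ι) :
    x k ^ 6 + esymmAt x 2 * x k ^ 4 + esymmAt x 4 * x k ^ 2 + esymmAt x 6 =
      esymmAt x 5 * x k := by
  have vieta := sum_esymmAt_mul_pow_eq_zero x k
  simp only [hι, Finset.sum_range_succ, Finset.sum_range_zero, esymmAt_zero, esymmAt_one, h1, h3,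
    Nat.reduceAdd, Nat.reduceSub] at vieta
  linear_combination vieta

lemma sum_pow_four_eq_neg_mul_sum_sq_of_cubic {x z : ι → R} {p q r : R}
    (hz : ∀ k, z k ^ 3 + p * z k + q = r * x k) (hz1 : ∑ k, z k = 0) (hzx : ∑ k, z k * x k = 0) :
    ∑ k, z k ^ 4 = -p * ∑ k, z k ^ 2 :=
  calc
    ∑ k, z k ^ 4 = ∑ k, (-p * z k ^ 2 - q * z k + r * (z k * x k)) :=
      Finset.sum_congr rfl fun k _ => by linear_combination z k * hz k
    _ = -p * ∑ k, z k ^ 2 := by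
      simp only [Finset.sum_add_distrib, Finset.sum_sub_distrib, ← Finset.mul_sum, hz1, hzx,
        mul_zero, sub_zero, add_zero]

lemma sq_sum_sq_eq_four_mul_sum_pow_four_of_esymmAt (hι : Fintype.card ι = 6) {x : ι → R}
    {t : R} (h1 : ∑ k, x k = 0) (h2 : esymmAt x 2 = 3 * t) (h3 : esymmAt x 3 = 0) :
    (∑ k, (x k ^ 2 + t) ^ 2) ^ 2 = 4 * ∑ k, (x k ^ 2 + t) ^ 4 := by
  have p2 := sum_sq_eq_neg_two_mul_esymmAt h1
  have p3 := sum_pow_three_eq_three_mul_esymmAt h1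
  have p4 := sum_pow_four_eq_esymmAt h1
  rw [h2] at p2 p4
  rw [h3, mul_zero] at p3
  have sum_z : ∑ k, (x k ^ 2 + t) = 0 := by
    simp only [Finset.sum_add_distrib, p2, Finset.sum_const, Finset.card_univ, hι]
    ring
  have sum_zx : ∑ k, (x k ^ 2 + t) * x k = 0 := by
    simp only [add_mul, ← pow_succ, Finset.sum_add_distrib, ← Finset.mul_sum, h1, p3, mul_zero,
      add_zero]
  have depressed_cubic : ∀ k, (x k ^ 2 + t) ^ 3 + (esymmAt x 4 - 3 * t ^ 2) * (x k ^ 2 + t) +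
      (esymmAt x 6 - t * esymmAt x 4 + 2 * t ^ 3) = esymmAt x 5 * x k := fun k => by
    linear_combination sextic_eq_esymmAt_five_mul hι h1 h3 k - x k ^ 4 * h2
  have sum_z_sq : ∑ k, (x k ^ 2 + t) ^ 2 = -4 * (esymmAt x 4 - 3 * t ^ 2) := by
    simp only [add_sq, ← pow_mul, Finset.sum_add_distrib, ← Finset.mul_sum, ← Finset.sum_mul,
      Nat.reduceMul, p2, p4, Finset.sum_const, Finset.card_univ, hι]
    ring
  rw [sum_pow_four_eq_neg_mul_sum_sq_of_cubic depressed_cubic sum_z sum_zx, sum_z_sq]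
  ring

end PowerSums

lemma sq_sum_sq_eq_four_mul_sum_pow_four_of_mem_span {ι K : Type*} [Fintype ι] [Field K]
    [NeZero (2 : K)] [NeZero (3 : K)] (hι : Fintype.card ι = 6) {x y : ι → K}
    (h1 : ∑ k, x k = 0) (h3 : ∑ k, x k ^ 3 = 0) (hsum : ∑ k, y k = 0)
    (hy : y ∈ Submodule.span K {1, fun k => x k ^ 2}) :
    (∑ k, y k ^ 2) ^ 2 = 4 * ∑ k, y k ^ 4 := by
  have two_ne : (2 : K) ≠ 0 := NeZero.ne 2
  have three_ne : (3 : K) ≠ 0 := NeZero.ne 3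
  obtain ⟨a, b, rfl⟩ := Submodule.mem_span_pair.mp hy
  obtain ⟨t, ht⟩ : ∃ t, esymmAt x 2 = 3 * t := ⟨esymmAt x 2 / 3, (mul_div_cancel₀ _ three_ne).symm⟩
  have e3 : esymmAt x 3 = 0 := by
    simpa [three_ne, h3] using (sum_pow_three_eq_three_mul_esymmAt h1).symm
  have ha : a = b * t := by
    have hsum_coords : 6 * a + b * (-2 * (3 * t)) = 0 := by
      simpa [Finset.sum_add_distrib, ← Finset.mul_sum, hι, sum_sq_eq_neg_two_mul_esymmAt h1, ht]
        using hsum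
    apply mul_left_cancel₀ (mul_ne_zero two_ne three_ne)
    linear_combination hsum_coords
  have hpolar : ∀ k, (a • (1 : ι → K) + b • fun k => x k ^ 2) k = b * (x k ^ 2 + t) := fun k => by
    simp only [ha, Pi.add_apply, Pi.smul_apply, Pi.one_apply, smul_eq_mul]
    ring
  simp only [hpolar, mul_pow, ← Finset.mul_sum]
  linear_combination b ^ 4 * sq_sum_sq_eq_four_mul_sum_pow_four_of_esymmAt hι h1 ht e3

section SignVectors

variable {ι R : Type*} [DecidableEq ι] [CommRing R]

/-- The vector `ε^A` of `eps`, over an arbitrary index type and coefficient ring. -/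
def signVector (R : Type*) [CommRing R] (A : Finset ι) : ι → R := fun k => if k ∈ A then 1 else -1

lemma signVector_sq (A : Finset ι) (k : ι) : signVector R A k ^ 2 = 1 := by
  unfold signVector
  split_ifs <;> ring

lemma exists_eq_smul_signVector [Finite ι] [NoZeroDivisors R] {x : ι → R} {c : R}
    (h : ∀ k, x k ^ 2 = c ^ 2) : ∃ A : Finset ι, x = c • signVector R A := by
  refine ⟨(Set.toFinite {k | x k = c}).toFinset, funext fun k => ?_⟩
  rcases eq_or_ne (x k) c with hk | hk
  · simp [signVector, hk]
  · simpa [signVector, hk] using (sq_eq_sq_iff_eq_or_eq_neg.mp (h k)).resolve_left hk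

lemma exists_forall_sq_eq_iff_exists_smul_signVector [Finite ι] [NoZeroDivisors R] {x : ι → R}
    (hx : x ≠ 0) :
    (∃ a : R, ∀ k, x k ^ 2 = a) ↔ ∃ A : Finset ι, ∃ c : R, c ≠ 0 ∧ x = c • signVector R A := by
  constructor
  · rintro ⟨a, ha⟩
    obtain ⟨i, hi⟩ := Function.ne_iff.mp hx
    obtain ⟨A, hA⟩ := exists_eq_smul_signVector fun k => (ha k).trans (ha i).symm
    exact ⟨A, x i, hi, hA⟩
  · rintro ⟨A, c, -, rfl⟩
    exact ⟨c ^ 2, fun k => by simp [mul_pow, signVector_sq]⟩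

variable [Fintype ι]

lemma sum_signVector (A : Finset ι) :
    ∑ k, signVector R A k = 2 * A.card - Fintype.card ι := by
  have hk : ∀ k, signVector R A k = 2 * (if k ∈ A then 1 else 0) - 1 := fun k => by
    unfold signVector
    split_ifs <;> ring
  simp [hk, mul_comm]

lemma card_eq_three_of_sum_signVector_eq_zero [NoZeroDivisors R] [NeZero (2 : R)] [NeZero (3 : R)]
    (hι : Fintype.card ι = 6) {A : Finset ι} (hA : ∑ k, signVector R A k = 0) : A.card = 3 := by
  have two_ne : (2 : R) ≠ 0 := NeZero.ne 2
  have three_ne : (3 : R) ≠ 0 := NeZero.ne 3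
  have hcard : (A.card : R) = 3 := by
    rw [sum_signVector, hι] at hA
    apply mul_left_cancel₀ two_ne
    push_cast at hA
    linear_combination hA
  have hle : A.card ≤ 6 := hι ▸ A.card_le_univ
  by_contra hne
  -- Every nonzero integer between `-3` and `3` divides `6`, so it stays nonzero in `R`.
  obtain ⟨m, hm⟩ : (A.card : ℤ) - 3 ∣ 6 := by
    generalize A.card = n at hle hne
    interval_cases n <;> first | decide | exact absurd rfl hne
  have cast_hm : (2 : R) * 3 = (A.card - 3) * m := by
    exact_mod_cast congrArg (Int.cast : ℤ → R) hm
  rw [hcard, sub_self, zero_mul] at cast_hm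
  exact mul_ne_zero two_ne three_ne cast_hm

end SignVectors

section LinearDependence

variable {ι K : Type*} [DivisionRing K]

lemma linearIndependent_triple_iff_of_notMem_span {V : Type*} [AddCommGroup V] [Module K V]
    {u v w : V} (h : w ∉ Submodule.span K {u, v}) :
    LinearIndependent K ![u, v, w] ↔ LinearIndependent K ![u, v] := by
  have snoc : ![u, v, w] = Fin.snoc ![u, v] w := by
    ext i
    fin_cases i <;> rfl
  rw [snoc, linearIndependent_finSnoc, Matrix.range_cons_cons_empty]
  exact and_iff_left h

lemma not_linearIndependent_one_iff_exists_forall_eq [Nonempty ι] (f : ι → K) :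
    ¬ LinearIndependent K ![1, f] ↔ ∃ a : K, ∀ k, f k = a := by
  simp [LinearIndependent.pair_iff' (one_ne_zero (α := ι → K)), funext_iff, eq_comm]

end LinearDependence

theorem cubic_surface_section_singular_points_general {ι K : Type*} [Fintype ι] [DecidableEq ι]
    (hι : Fintype.card ι = 6) [Field K] [NeZero (2 : K)] [NeZero (3 : K)] {x y : ι → K}
    (hsum : ∑ k, y k = 0) (hcr : (∑ k, y k ^ 2) ^ 2 ≠ 4 * ∑ k, y k ^ 4)
    (hx : x ≠ 0) (h1 : ∑ k, x k = 0) (h3 : ∑ k, x k ^ 3 = 0) (hxy : ∑ k, y k * x k = 0) :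
    ¬ LinearIndependent K ![(1 : ι → K), fun k => x k ^ 2, y] ↔
      ∃ A : Finset ι, A.card = 3 ∧ ∑ k, signVector K A k * y k = 0 ∧
        ∃ c : K, c ≠ 0 ∧ x = c • signVector K A := by
  have : Nonempty ι := Fintype.card_pos_iff.mp (by lia)
  have hy : y ∉ Submodule.span K {1, fun k => x k ^ 2} :=
    fun hmem => hcr (sq_sum_sq_eq_four_mul_sum_pow_four_of_mem_span hι h1 h3 hsum hmem)
  rw [linearIndependent_triple_iff_of_notMem_span hy,
    not_linearIndependent_one_iff_exists_forall_eq,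
    exists_forall_sq_eq_iff_exists_smul_signVector hx]
  refine exists_congr fun A => ⟨?_, fun h => h.2.2⟩
  rintro ⟨c, hc, rfl⟩
  have sum_eps : ∑ k, signVector K A k = 0 := by
    simpa [← Finset.mul_sum, hc] using h1
  have sum_eps_mul : ∑ k, signVector K A k * y k = 0 := by
    simpa [mul_left_comm _ c, ← Finset.mul_sum, hc, mul_comm (y _)] using hxy
  exact ⟨card_eq_three_of_sum_signVector_eq_zero hι sum_eps, sum_eps_mul, c, hc, rfl⟩

/-- if `[y]` does not lie on the Castelnuovo–Richmond quartic, then the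
singular points of the cubic surface `Σ₃ ∩ H_y` (Jacobian criterion: `(1,…,1)`,
`(x₀²,…,x₅²)`, `y` linearly dependent) are exactly the nodes `[ε^A]` with
`∑ ε^A_k y_k = 0`. -/
theorem cubic_surface_section_singular_points (y : Fin 6 → ℂ) (hy : y ≠ 0)
    (hsum : (∑ k, y k) = 0)
    (hcr : (∑ k, (y k) ^ 2) ^ 2 ≠ 4 * (∑ k, (y k) ^ 4))
    (x : Fin 6 → ℂ) (hx : x ≠ 0) (h1 : (∑ k, x k) = 0) (h3 : (∑ k, (x k) ^ 3) = 0)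
    (hxy : (∑ k, y k * x k) = 0) :
    ¬ LinearIndependent ℂ ![(1 : Fin 6 → ℂ), fun k => (x k) ^ 2, y] ↔
      ∃ A : Finset (Fin 6), A.card = 3 ∧ (∑ k, eps A k * y k) = 0 ∧
        ∃ c : ℂ, c ≠ 0 ∧ x = c • eps A :=
  cubic_surface_section_singular_points_general (Fintype.card_fin 6) hsum hcr hx h1 h3 hxy
end

section
/- Define δ : ℂ⁶ → ℂ⁶ by δ(x)_k = 6 x_k² − Σ_{j=0}^{5} x_j². Then: (i) for every x ∈ ℂ⁶ ∖ {0} with Σ_k x_k = 0, Σ_k x_k³ = 0 and [x] on no Segre plane, one has δ(x) ≠ 0, Σ_k δ(x)_k = 0, (Σ_k δ(x)_k²)² = 4 Σ_k δ(x)_k⁴, and Σ_k ε^A_k δ(x)_k ≠ 0 for every 3-element subset A; (ii) the induced map [x] ↦ [δ(x)] is a bijection from the set of points of the Segre cubic Σ₃ lying on no Segre plane onto the set of points of the Castelnuovo–Richmond quartic CR₄ lying on none of the 10 hyperplanes {[y] : Σ_k ε^A_k y_k = 0} dual to the nodes. -/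
open scoped BigOperators

/-- A fixed-point-free involution of `{0,…,5}`. -/
def FPF (τ : Equiv.Perm (Fin 6)) : Prop :=
  (∀ i, τ (τ i) = i) ∧ ∀ i, τ i ≠ i

/-- The linear subspace `P_τ = {x ∈ ℂ⁶ : x i + x (τ i) = 0 for all i}`. -/
noncomputable def segrePlane (τ : Equiv.Perm (Fin 6)) : Submodule ℂ (Fin 6 → ℂ) where
  carrier := {x | ∀ i, x i + x (τ i) = 0}
  add_mem' := by
    intro a b ha hb i
    simp only [Pi.add_apply]
    linear_combination ha i + hb i
  zero_mem' := by intro i; simp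
  smul_mem' := by
    intro c x hx i
    simp only [Pi.smul_apply, smul_eq_mul]
    linear_combination c * hx i

/-- The duality map `δ(x)_k = 6 x_k² - ∑ x_j²`. -/
noncomputable def delta (x : Fin 6 → ℂ) : Fin 6 → ℂ :=
  fun k => 6 * (x k) ^ 2 - (∑ j, (x j) ^ 2)

/-- `x` represents a point of the Segre cubic lying on no Segre plane. -/
def SegreNoPlane (x : Fin 6 → ℂ) : Prop :=
  x ≠ 0 ∧ (∑ k, x k) = 0 ∧ (∑ k, (x k) ^ 3) = 0 ∧
    ∀ τ : Equiv.Perm (Fin 6), FPF τ → x ∉ segrePlane τ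

/-- `y` represents a point of the Castelnuovo–Richmond quartic lying on none of the 10
hyperplanes dual to the nodes of the Segre cubic. -/
def CRNoNodeHyp (y : Fin 6 → ℂ) : Prop :=
  y ≠ 0 ∧ (∑ k, y k) = 0 ∧ (∑ k, (y k) ^ 2) ^ 2 = 4 * (∑ k, (y k) ^ 4) ∧
    ∀ A : Finset (Fin 6), A.card = 3 → (∑ k, eps A k * y k) ≠ 0

/-!
The map `delta` is, up to scalars and projection to `∑ x_k = 0`, the polar map of the Segre cubic;
its inverse is the polar map `quarticPolar` of the Castelnuovo–Richmond quartic.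

Take coordinates with sum zero and write `e_j` for their elementary symmetric functions. The Segre
cubic is `e₃ = 0`, so on it `∏ (t - x_k)` is an even polynomial minus `e₅ t`; evaluating at
`t = x_k` gives `e₅ x_k` as a cubic polynomial in `x_k²`, hence in `delta x k`, and this is
`quarticPolar (delta x) = 216 e₅ x`. If `e₅ = 0`, the sextic is even, its roots pair off as `±r`,
and `x` lies on a Segre plane.

The quartic is `4 e₄ = e₂²`, so on it `∏ (t - y_k) = c(t)² - κ t - const` with
`c(t) = t³ + (e₂/2) t - e₃/2`. Since `c(y_k) = quarticPolar y k`, evaluating at `t = y_k` gives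
`delta (quarticPolar y) = 6 κ y`. If `κ = 0`, the sextic is a product of two cubics without
quadratic term, and the roots of one of them are three coordinates with sum zero: `y` lies on a node
hyperplane. Conversely `quarticPolar` contracts each node hyperplane section to the node `eps A`,
at which `delta` vanishes.
-/

section ElementarySymmetric

variable {ι R : Type*} [Fintype ι] [CommRing R]

/-- The value `e_j(y)` of the `j`-th elementary symmetric polynomial at a finite family `y`. -/
def elemSymm (y : ι → R) (j : ℕ) : R := (Finset.univ.val.map y).esymm j

theorem eval_esymm_eq_elemSymm (y : ι → R) (j : ℕ) :
    MvPolynomial.eval y (MvPolynomial.esymm ι R j) = elemSymm y j := by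
  rw [← MvPolynomial.aeval_eq_eval, MvPolynomial.aeval_esymm_eq_multiset_esymm, elemSymm]

theorem elemSymm_zero (y : ι → R) : elemSymm y 0 = 1 := by
  rw [← eval_esymm_eq_elemSymm, MvPolynomial.esymm_zero, map_one]

theorem elemSymm_one (y : ι → R) : elemSymm y 1 = ∑ i, y i := by
  simp only [← eval_esymm_eq_elemSymm, MvPolynomial.esymm_one, map_sum, MvPolynomial.eval_X]

theorem mul_elemSymm_eq_sum_range (y : ι → R) (k : ℕ) :
    k * elemSymm y k = (-1) ^ (k + 1) *
      ∑ j ∈ Finset.range k, (-1) ^ j * elemSymm y j * ∑ i, y i ^ (k - j) := by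
  have newton := congrArg (MvPolynomial.eval y) (MvPolynomial.mul_esymm_eq_sum ι R k)
  simpa [MvPolynomial.psum, eval_esymm_eq_elemSymm, Finset.sum_filter,
    Finset.Nat.sum_antidiagonal_eq_sum_range_succ_mk, Finset.sum_range_succ,
    Finset.sum_ite_of_true fun j (hj : j ∈ Finset.range k) => Finset.mem_range.1 hj] using newton

theorem sum_sq_eq_of_sum_eq_zero {y : ι → R} (hy : ∑ i, y i = 0) :
    ∑ i, y i ^ 2 = -2 * elemSymm y 2 := by
  have newton := mul_elemSymm_eq_sum_range y 2
  simp only [Finset.sum_range_succ, Finset.sum_range_zero, elemSymm_zero, elemSymm_one, hy,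
    Nat.reduceSub] at newton
  linear_combination newton

theorem sum_cube_eq_of_sum_eq_zero {y : ι → R} (hy : ∑ i, y i = 0) :
    ∑ i, y i ^ 3 = 3 * elemSymm y 3 := by
  have newton := mul_elemSymm_eq_sum_range y 3
  simp only [Finset.sum_range_succ, Finset.sum_range_zero, elemSymm_zero, elemSymm_one, hy,
    Nat.reduceSub, pow_one] at newton
  linear_combination -newton

theorem sum_pow_four_eq_of_sum_eq_zero {y : ι → R} (hy : ∑ i, y i = 0) :
    ∑ i, y i ^ 4 = 2 * elemSymm y 2 ^ 2 - 4 * elemSymm y 4 := by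
  have newton := mul_elemSymm_eq_sum_range y 4
  simp only [Finset.sum_range_succ, Finset.sum_range_zero, elemSymm_zero, elemSymm_one, hy,
    Nat.reduceSub, pow_one, sum_sq_eq_of_sum_eq_zero hy] at newton
  linear_combination newton

end ElementarySymmetric

section ProductsOfLinearFactors

open Polynomial

variable {R : Type*} [CommRing R]

theorem prod_X_sub_C_fin_six {y : Fin 6 → R} (hy : ∑ k, y k = 0) :
    ∏ k, (X - C (y k)) = X ^ 6 + C (elemSymm y 2) * X ^ 4 - C (elemSymm y 3) * X ^ 3 +
      C (elemSymm y 4) * X ^ 2 - C (elemSymm y 5) * X + C (elemSymm y 6) := by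
  have vieta := Multiset.prod_X_sub_X_eq_sum_esymm (Finset.univ.val.map y)
  rw [Multiset.map_map] at vieta
  change ∏ k, (X - C (y k)) = ∑ j ∈ Finset.range _, (-1) ^ j * (C (elemSymm y j) * X ^ _) at vieta
  rw [vieta]
  simp [Finset.sum_range_succ, elemSymm_zero, elemSymm_one, hy]
  ring

theorem sextic_eq_zero {y : Fin 6 → R} (hy : ∑ k, y k = 0) (k : Fin 6) :
    y k ^ 6 + elemSymm y 2 * y k ^ 4 - elemSymm y 3 * y k ^ 3 + elemSymm y 4 * y k ^ 2 -
      elemSymm y 5 * y k + elemSymm y 6 = 0 := by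
  have hroot : (∏ j, (X - C (y j))).eval (y k) = 0 := by
    rw [eval_prod]
    exact Finset.prod_eq_zero (Finset.mem_univ k) (by simp)
  simpa [prod_X_sub_C_fin_six hy] using hroot

variable [IsDomain R]

theorem roots_prod_X_sub_C_univ {ι : Type*} [Fintype ι] (x : ι → R) :
    (∏ i, (X - C (x i))).roots = Finset.univ.val.map x := by
  rw [← roots_multiset_prod_X_sub_C (Finset.univ.val.map x), Multiset.map_map]
  rfl

theorem exists_equiv_of_prod_X_sub_C_eq {ι κ : Type*} [Fintype ι] [Fintype κ] {x : ι → R}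
    {z : κ → R} (h : ∏ i, (X - C (x i)) = ∏ j, (X - C (z j))) :
    ∃ e : κ ≃ ι, ∀ j, x (e j) = z j := by
  classical
  have hmultiset : Finset.univ.val.map x = Finset.univ.val.map z := by
    simpa only [roots_prod_X_sub_C_univ] using congrArg roots h
  have hcard (v : R) : Fintype.card {j // z j = v} = Fintype.card {i // x i = v} := by
    simpa [Multiset.count_map, Fintype.card_subtype, Finset.card_def, eq_comm] using
      congrArg (Multiset.count v) hmultiset.symm
  exact ⟨Equiv.ofFiberEquiv fun v => Fintype.equivOfCardEq (hcard v),
    fun j => Equiv.ofFiberEquiv_map _ j⟩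

theorem exists_subset_eq_prod_X_sub_C {ι : Type*} {s : Finset ι} {y : ι → R}
    {P Q : R[X]} (hP : P.Monic) (h : ∏ i ∈ s, (X - C (y i)) = P * Q) :
    ∃ A ⊆ s, P = ∏ i ∈ A, (X - C (y i)) := by
  classical
  obtain ⟨A, B, b, c, hAB, -, hbc, hPA, -⟩ :=
    mul_eq_mul_prime_prod (fun i _ => prime_X_sub_C (y i)) (h.symm.trans (one_mul _).symm)
  have hA : (∏ i ∈ A, (X - C (y i))).Monic := monic_prod_X_sub_C y A
  have hb : b.Monic := hA.of_mul_monic_right (hPA ▸ hP)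
  refine ⟨A, hAB ▸ Finset.subset_union_left, ?_⟩
  rw [hPA, hb.eq_one_of_isUnit (.of_mul_eq_one _ hbc.symm), one_mul]

theorem exists_card_eq_three_of_prod_X_sub_C_eq_depressed_cubic_mul {ι : Type*} {s : Finset ι}
    {y : ι → R} {p q : R} {Q : R[X]}
    (h : ∏ i ∈ s, (X - C (y i)) = (X ^ 3 + C p * X + C q) * Q) :
    ∃ A ⊆ s, A.card = 3 ∧ ∑ i ∈ A, y i = 0 := by
  have hdeg : (X ^ 3 + C p * X + C q).natDegree = 3 := by compute_degree!
  obtain ⟨A, hAs, hA⟩ := exists_subset_eq_prod_X_sub_C (by monicity!) h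
  have hcard : A.card = 3 := by rw [← hdeg, hA, natDegree_finsetProd_X_sub_C_eq_card]
  refine ⟨A, hAs, hcard, ?_⟩
  have hnext : (X ^ 3 + C p * X + C q).nextCoeff = 0 := by
    rw [nextCoeff_of_natDegree_pos (by lia), hdeg]
    simp
  rwa [hA, prod_X_sub_C_nextCoeff, neg_eq_zero] at hnext

variable {K : Type*} [Field K] [IsAlgClosed K]

theorem exists_involutive_neg_of_prod_X_sub_C_eq_expand {ι : Type*} [Fintype ι]
    {x : ι → K} {G : K[X]} (hG : G.Monic) (h : ∏ i, (X - C (x i)) = expand K 2 G) :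
    ∃ τ : Equiv.Perm ι, (∀ i, τ (τ i) = i) ∧ (∀ i, τ i ≠ i) ∧ ∀ i, x (τ i) = -x i := by
  classical
  choose r hr using fun s : K => IsAlgClosed.exists_pow_nat_eq s two_pos
  let z : G.roots.ToType ⊕ G.roots.ToType → K := Sum.elim (fun s => r s) (fun s => -r s)
  have hz : ∏ i, (X - C (x i)) = ∏ j, (X - C (z j)) := by
    calc ∏ i, (X - C (x i))
        = expand K 2 (G.roots.map fun s => X - C s).prod := by
          rw [h, ← (IsAlgClosed.splits G).eq_prod_roots_of_monic hG]
      _ = ∏ s : G.roots.ToType, (X ^ 2 - C (s : K)) := by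
          rw [map_multiset_prod, Multiset.map_map, Finset.prod,
            Multiset.map_univ G.roots fun s => X ^ 2 - C s]
          simp
      _ = ∏ j, (X - C (z j)) := by
          rw [Fintype.prod_sum_type, ← Finset.prod_mul_distrib]
          refine Finset.prod_congr rfl fun s _ => ?_
          rw [← hr s]
          simp [z]
          ring
  obtain ⟨e, he⟩ := exists_equiv_of_prod_X_sub_C_eq hz
  refine ⟨(e.symm.trans (Equiv.sumComm _ _)).trans e, ?_, ?_, ?_⟩
  · intro i; simp
  · intro i
    obtain ⟨j | j, rfl⟩ := e.surjective i <;> simp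
  · intro i
    obtain ⟨j | j, rfl⟩ := e.surjective i <;> simp [he, z]

end ProductsOfLinearFactors

section PolarMaps

/-- The polar map of the Castelnuovo–Richmond quartic. On `∑ k, y k = 0` it is, up to the factor
`-16`, the gradient of `(∑ y_k²)² - 4 ∑ y_k⁴` projected to the hyperplane `∑ k, y k = 0`; it is
the inverse of `delta` up to scalars. -/
noncomputable def quarticPolar (y : Fin 6 → ℂ) : Fin 6 → ℂ :=
  fun k => y k ^ 3 - (∑ j, y j ^ 2) / 4 * y k - (∑ j, y j ^ 3) / 6

theorem delta_smul (c : ℂ) (x : Fin 6 → ℂ) : delta (c • x) = c ^ 2 • delta x := by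
  funext k
  simp only [delta, Pi.smul_apply, smul_eq_mul, mul_pow, ← Finset.mul_sum]
  ring

theorem quarticPolar_smul (c : ℂ) (y : Fin 6 → ℂ) :
    quarticPolar (c • y) = c ^ 3 • quarticPolar y := by
  funext k
  simp only [quarticPolar, Pi.smul_apply, smul_eq_mul, mul_pow, ← Finset.mul_sum]
  ring

theorem quarticPolar_zero : quarticPolar 0 = 0 := by
  simpa using quarticPolar_smul 0 0

theorem delta_eps (A : Finset (Fin 6)) : delta (eps A) = 0 := by
  have hsq (k : Fin 6) : eps A k ^ 2 = 1 := by
    unfold eps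
    split_ifs <;> norm_num
  funext k
  norm_num [delta, hsq]

theorem sum_delta (x : Fin 6 → ℂ) : ∑ k, delta x k = 0 := by
  simp only [delta, Fin.sum_univ_six]
  ring

variable {x y : Fin 6 → ℂ}

theorem sum_quarticPolar (hy : ∑ k, y k = 0) : ∑ k, quarticPolar y k = 0 := by
  simp only [quarticPolar, Finset.sum_sub_distrib, ← Finset.mul_sum, hy, Finset.sum_const,
    Finset.card_univ, Fintype.card_fin]
  ring

theorem sum_mul_delta (hx : ∑ k, x k = 0) : ∑ k, x k * delta x k = 6 * ∑ k, x k ^ 3 := by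
  simp only [delta, Fin.sum_univ_six] at hx ⊢
  linear_combination
    -(x 0 ^ 2 + x 1 ^ 2 + x 2 ^ 2 + x 3 ^ 2 + x 4 ^ 2 + x 5 ^ 2) * hx

theorem four_mul_sum_mul_quarticPolar (hy : ∑ k, y k = 0) :
    4 * ∑ k, y k * quarticPolar y k = 4 * ∑ k, y k ^ 4 - (∑ k, y k ^ 2) ^ 2 := by
  have hsum : ∑ k, y k * quarticPolar y k =
      ∑ k, y k ^ 4 - (∑ j, y j ^ 2) / 4 * ∑ k, y k ^ 2 - (∑ j, y j ^ 3) / 6 * ∑ k, y k := by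
    simp only [Finset.mul_sum, ← Finset.sum_sub_distrib]
    refine Finset.sum_congr rfl fun k _ => ?_
    simp only [quarticPolar]
    ring
  rw [hsum, hy]
  ring

end PolarMaps

section SegreCubic

open Polynomial

variable {x : Fin 6 → ℂ}

theorem elemSymm_three_eq_zero (hx : ∑ k, x k = 0) (hx3 : ∑ k, x k ^ 3 = 0) :
    elemSymm x 3 = 0 := by
  simpa [hx3] using (sum_cube_eq_of_sum_eq_zero hx).symm

theorem quarticPolar_delta (hx : ∑ k, x k = 0) (hx3 : ∑ k, x k ^ 3 = 0) :
    quarticPolar (delta x) = (216 * elemSymm x 5) • x := by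
  set a := 216 * elemSymm x 5
  have hdelta (k : Fin 6) : delta x k = 6 * x k ^ 2 + 2 * elemSymm x 2 := by
    rw [delta, sum_sq_eq_of_sum_eq_zero hx]
    ring
  have hsq : ∑ k, delta x k ^ 2 = 48 * elemSymm x 2 ^ 2 - 144 * elemSymm x 4 := by
    calc ∑ k, delta x k ^ 2
        = 36 * ∑ k, x k ^ 4 + 24 * elemSymm x 2 * ∑ k, x k ^ 2 + 24 * elemSymm x 2 ^ 2 := by
          simp only [hdelta, Fin.sum_univ_six]
          ring
      _ = 48 * elemSymm x 2 ^ 2 - 144 * elemSymm x 4 := by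
          rw [sum_pow_four_eq_of_sum_eq_zero hx, sum_sq_eq_of_sum_eq_zero hx]
          ring
  -- Both sides have coordinate sum zero, so `∑ k, delta x k ^ 3` need not be computed.
  obtain ⟨b, hb⟩ : ∃ b, ∀ k, quarticPolar (delta x) k = a * x k + b := by
    refine ⟨72 * elemSymm x 2 * elemSymm x 4 - 16 * elemSymm x 2 ^ 3 - 216 * elemSymm x 6
      - (∑ j, delta x j ^ 3) / 6, fun k => ?_⟩
    have hroot := sextic_eq_zero hx k
    rw [elemSymm_three_eq_zero hx hx3] at hroot
    rw [quarticPolar, hsq, hdelta]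
    linear_combination 216 * hroot
  have hb0 : b = 0 := by
    have hsum := sum_quarticPolar (sum_delta x)
    simpa [hb, Finset.sum_add_distrib, ← Finset.mul_sum, hx] using hsum
  funext k
  simp [hb, hb0]

theorem sq_sum_delta_sq (hx : ∑ k, x k = 0) (hx3 : ∑ k, x k ^ 3 = 0) :
    (∑ k, delta x k ^ 2) ^ 2 = 4 * ∑ k, delta x k ^ 4 := by
  have hincidence : ∑ k, delta x k * quarticPolar (delta x) k = 0 := by
    calc ∑ k, delta x k * quarticPolar (delta x) k
        = 216 * elemSymm x 5 * ∑ k, x k * delta x k := by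
          rw [quarticPolar_delta hx hx3, Finset.mul_sum]
          refine Finset.sum_congr rfl fun k _ => ?_
          rw [Pi.smul_apply, smul_eq_mul]
          ring
      _ = 0 := by rw [sum_mul_delta hx, hx3, mul_zero, mul_zero]
  have heuler := four_mul_sum_mul_quarticPolar (sum_delta x)
  rw [hincidence] at heuler
  linear_combination heuler

theorem elemSymm_five_ne_zero (hx : SegreNoPlane x) : elemSymm x 5 ≠ 0 := by
  obtain ⟨-, hx1, hx3, hplane⟩ := hx
  intro h5
  have hexpand : ∏ k, (X - C (x k)) =
      expand ℂ 2 (X ^ 3 + C (elemSymm x 2) * X ^ 2 + C (elemSymm x 4) * X + C (elemSymm x 6)) := by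
    rw [prod_X_sub_C_fin_six hx1, elemSymm_three_eq_zero hx1 hx3, h5]
    simp [← pow_mul]
  obtain ⟨τ, hinv, hfix, hneg⟩ :=
    exists_involutive_neg_of_prod_X_sub_C_eq_expand (by monicity!) hexpand
  exact hplane τ ⟨hinv, hfix⟩ fun k => by rw [hneg, add_neg_cancel]

theorem quarticPolar_delta_ne_zero (hx : SegreNoPlane x) : quarticPolar (delta x) ≠ 0 := by
  rw [quarticPolar_delta hx.2.1 hx.2.2.1]
  exact smul_ne_zero (mul_ne_zero (by norm_num) (elemSymm_five_ne_zero hx)) hx.1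

end SegreCubic

section NodeHyperplanes

theorem sum_eps_mul (A : Finset (Fin 6)) (y : Fin 6 → ℂ) :
    ∑ k, eps A k * y k = ∑ k ∈ A, y k - ∑ k ∈ Aᶜ, y k := by
  simp only [eps, ite_mul, one_mul, neg_mul, Finset.sum_ite, Finset.sum_neg_distrib,
    ← sub_eq_add_neg, Finset.filter_univ_mem, ← Finset.compl_filter]

theorem two_mul_sum_pow_four_of_card_eq_three {ι R : Type*} [CommRing R] {s : Finset ι}
    {y : ι → R} (hs : s.card = 3) (hy : ∑ i ∈ s, y i = 0) :
    2 * ∑ i ∈ s, y i ^ 4 = (∑ i ∈ s, y i ^ 2) ^ 2 := by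
  classical
  obtain ⟨a, b, c, hab, hac, hbc, rfl⟩ := Finset.card_eq_three.1 hs
  simp only [Finset.sum_insert, Finset.sum_singleton, Finset.mem_insert, Finset.mem_singleton, hab,
    hac, hbc, or_self, not_false_eq_true] at hy ⊢
  have hc : y c = -y a - y b := by linear_combination hy
  rw [hc]
  ring

theorem six_mul_cube_of_card_eq_three {ι R : Type*} [CommRing R] {s : Finset ι}
    {y : ι → R} (hs : s.card = 3) (hy : ∑ i ∈ s, y i = 0) {i : ι} (hi : i ∈ s) :
    6 * y i ^ 3 = 3 * (∑ j ∈ s, y j ^ 2) * y i + 2 * ∑ j ∈ s, y j ^ 3 := by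
  classical
  obtain ⟨a, b, c, hab, hac, hbc, rfl⟩ := Finset.card_eq_three.1 hs
  simp only [Finset.sum_insert, Finset.sum_singleton, Finset.mem_insert, Finset.mem_singleton, hab,
    hac, hbc, or_self, not_false_eq_true] at hy hi ⊢
  have hc : y c = -y a - y b := by linear_combination hy
  obtain rfl | rfl | rfl := hi <;> rw [hc] <;> ring

variable {y : Fin 6 → ℂ} {A : Finset (Fin 6)}

theorem quarticPolar_eq_smul_eps (hy : ∑ k, y k = 0)
    (hy4 : (∑ k, y k ^ 2) ^ 2 = 4 * ∑ k, y k ^ 4) (hA : A.card = 3)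
    (hnode : ∑ k, eps A k * y k = 0) : ∃ c : ℂ, quarticPolar y = c • eps A := by
  have hAc : Aᶜ.card = 3 := by rw [Finset.card_compl, hA, Fintype.card_fin]
  have hsplit (g : Fin 6 → ℂ) : ∑ k, g k = ∑ k ∈ A, g k + ∑ k ∈ Aᶜ, g k :=
    (Finset.sum_add_sum_compl A g).symm
  rw [sum_eps_mul] at hnode
  rw [hsplit] at hy
  have hyA : ∑ k ∈ A, y k = 0 := by linear_combination (hy + hnode) / 2
  have hyAc : ∑ k ∈ Aᶜ, y k = 0 := by linear_combination (hy - hnode) / 2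
  have hsq : ∑ k ∈ A, y k ^ 2 = ∑ k ∈ Aᶜ, y k ^ 2 := by
    rw [hsplit, hsplit] at hy4
    rw [← sub_eq_zero, ← sq_eq_zero_iff]
    linear_combination -hy4 - 2 * two_mul_sum_pow_four_of_card_eq_three hA hyA
      - 2 * two_mul_sum_pow_four_of_card_eq_three hAc hyAc
  refine ⟨(∑ k ∈ A, y k ^ 3 - ∑ k ∈ Aᶜ, y k ^ 3) / 6, funext fun k => ?_⟩
  simp only [quarticPolar, Pi.smul_apply, smul_eq_mul, eps, hsplit, hsq]
  split_ifs with hk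
  · have hcube := six_mul_cube_of_card_eq_three hA hyA hk
    rw [hsq] at hcube
    linear_combination hcube / 6
  · have hcube := six_mul_cube_of_card_eq_three hAc hyAc (Finset.mem_compl.2 hk)
    linear_combination hcube / 6

end NodeHyperplanes

section CastelnuovoRichmondQuartic

open Polynomial

/-- The coefficient `κ` in `∏ k, (t - y k) = c(t)² - κ t - const`, where `c` is a depressed cubic
and `y` lies on the Castelnuovo–Richmond quartic. It measures how far the sextic is from splitting
into two depressed cubics, and `6 κ` is the factor by which `delta ∘ quarticPolar` scales `y`. -/
noncomputable def quarticMultiplier (y : Fin 6 → ℂ) : ℂ :=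
  elemSymm y 5 - elemSymm y 2 * elemSymm y 3 / 2

variable {y : Fin 6 → ℂ}

theorem four_mul_elemSymm_four (hy : ∑ k, y k = 0)
    (hy4 : (∑ k, y k ^ 2) ^ 2 = 4 * ∑ k, y k ^ 4) : 4 * elemSymm y 4 = elemSymm y 2 ^ 2 := by
  rw [sum_sq_eq_of_sum_eq_zero hy, sum_pow_four_eq_of_sum_eq_zero hy] at hy4
  linear_combination hy4 / 4

theorem quarticPolar_sq (hy : ∑ k, y k = 0)
    (hy4 : (∑ k, y k ^ 2) ^ 2 = 4 * ∑ k, y k ^ 4) (k : Fin 6) :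
    quarticPolar y k ^ 2 =
      quarticMultiplier y * y k + (elemSymm y 3 ^ 2 / 4 - elemSymm y 6) := by
  rw [quarticPolar, quarticMultiplier, sum_sq_eq_of_sum_eq_zero hy, sum_cube_eq_of_sum_eq_zero hy]
  linear_combination sextic_eq_zero hy k - y k ^ 2 / 4 * four_mul_elemSymm_four hy hy4

theorem delta_quarticPolar (hy : ∑ k, y k = 0)
    (hy4 : (∑ k, y k ^ 2) ^ 2 = 4 * ∑ k, y k ^ 4) :
    delta (quarticPolar y) = (6 * quarticMultiplier y) • y := by
  funext k
  simp only [delta, quarticPolar_sq hy hy4, Finset.sum_add_distrib, ← Finset.mul_sum, hy,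
    Finset.sum_const, Finset.card_univ, Fintype.card_fin, Pi.smul_apply, smul_eq_mul]
  ring

theorem sum_quarticPolar_cube (hy : ∑ k, y k = 0)
    (hy4 : (∑ k, y k ^ 2) ^ 2 = 4 * ∑ k, y k ^ 4) : ∑ k, quarticPolar y k ^ 3 = 0 := by
  have hincidence : ∑ k, y k * quarticPolar y k = 0 := by
    linear_combination (four_mul_sum_mul_quarticPolar hy - hy4) / 4
  have hsum := sum_mul_delta (sum_quarticPolar hy)
  have hdual : ∑ k, quarticPolar y k * delta (quarticPolar y) k = 0 := by
    calc ∑ k, quarticPolar y k * delta (quarticPolar y) k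
        = 6 * quarticMultiplier y * ∑ k, y k * quarticPolar y k := by
          rw [delta_quarticPolar hy hy4, Finset.mul_sum]
          refine Finset.sum_congr rfl fun k _ => ?_
          rw [Pi.smul_apply, smul_eq_mul]
          ring
      _ = 0 := by rw [hincidence, mul_zero]
  linear_combination (hdual - hsum) / 6

theorem quarticMultiplier_ne_zero (hy : CRNoNodeHyp y) : quarticMultiplier y ≠ 0 := by
  obtain ⟨-, hy1, hy4, hnode⟩ := hy
  intro hκ
  obtain ⟨g, hg⟩ := IsAlgClosed.exists_pow_nat_eq (elemSymm y 3 ^ 2 / 4 - elemSymm y 6) two_pos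
  obtain ⟨A, -, hA, hsum⟩ :
      ∃ A ⊆ Finset.univ, A.card = 3 ∧ ∑ k ∈ A, y k = 0 := by
    refine exists_card_eq_three_of_prod_X_sub_C_eq_depressed_cubic_mul (p := elemSymm y 2 / 2)
      (q := -(elemSymm y 3 / 2) + g)
      (Q := X ^ 3 + C (elemSymm y 2 / 2) * X + C (-(elemSymm y 3 / 2) - g)) ?_
    refine Polynomial.funext fun t => ?_
    rw [quarticMultiplier] at hκ
    simp only [prod_X_sub_C_fin_six hy1, eval_add, eval_sub, eval_mul, eval_pow, eval_X, eval_C]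
    linear_combination (-t) * hκ + hg + t ^ 2 / 4 * four_mul_elemSymm_four hy1 hy4
  refine hnode A hA ?_
  rw [sum_eps_mul]
  linear_combination 2 * hsum - hy1 - Finset.sum_add_sum_compl A y

theorem segreNoPlane_quarticPolar (hy : CRNoNodeHyp y) : SegreNoPlane (quarticPolar y) := by
  have hκ := quarticMultiplier_ne_zero hy
  obtain ⟨hy0, hy1, hy4, -⟩ := hy
  have hne : quarticPolar y ≠ 0 := fun h0 => by
    have hδ := delta_quarticPolar hy1 hy4
    rw [h0] at hδ
    refine smul_ne_zero (mul_ne_zero (by norm_num) hκ) hy0 (hδ.symm.trans ?_)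
    simpa using delta_smul 0 0
  refine ⟨hne, sum_quarticPolar hy1, sum_quarticPolar_cube hy1 hy4, fun τ _ hτ => hne ?_⟩
  funext k
  have hpair : quarticPolar y k + quarticPolar y (τ k) = 0 := hτ k
  have hyτ : y k = y (τ k) := by
    refine mul_left_cancel₀ hκ ?_
    linear_combination quarticPolar_sq hy1 hy4 (τ k) - quarticPolar_sq hy1 hy4 k +
      (quarticPolar y k - quarticPolar y (τ k)) * hpair
  have heq : quarticPolar y k = quarticPolar y (τ k) := by simp only [quarticPolar, hyτ]
  rw [Pi.zero_apply]
  linear_combination (hpair + heq) / 2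

end CastelnuovoRichmondQuartic

theorem crNoNodeHyp_delta {x : Fin 6 → ℂ} (hx : SegreNoPlane x) : CRNoNodeHyp (delta x) := by
  have hpolar := quarticPolar_delta_ne_zero hx
  have ⟨_, hx1, hx3, _⟩ := hx
  have hδ : delta x ≠ 0 := fun h0 => hpolar (by rw [h0, quarticPolar_zero])
  refine ⟨hδ, sum_delta x, sq_sum_delta_sq hx1 hx3, fun A hA hnode => hδ ?_⟩
  obtain ⟨c, hc⟩ :=
    quarticPolar_eq_smul_eps (sum_delta x) (sq_sum_delta_sq hx1 hx3) hA hnode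
  have hzero : (216 * elemSymm x 5) ^ 2 • delta x = 0 := by
    rw [← delta_smul, ← quarticPolar_delta hx1 hx3, hc, delta_smul, delta_eps, smul_zero]
  exact (smul_eq_zero.1 hzero).resolve_left
    (pow_ne_zero 2 (mul_ne_zero (by norm_num) (elemSymm_five_ne_zero hx)))

/-- (i) for `[x]` on the Segre cubic but on no Segre plane, `δ(x)` is a
nonzero vector representing a point of the Castelnuovo–Richmond quartic lying on none of
the 10 hyperplanes dual to the nodes; (ii) the induced map `[x] ↦ [δ(x)]` is a
well-defined bijection between these two loci. -/
theorem duality_map_bijection :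
    (∀ x : Fin 6 → ℂ, SegreNoPlane x → CRNoNodeHyp (delta x)) ∧
    (∀ x x' : Fin 6 → ℂ, SegreNoPlane x → SegreNoPlane x' →
      (∃ c : ℂ, c ≠ 0 ∧ x' = c • x) → ∃ c : ℂ, c ≠ 0 ∧ delta x' = c • delta x) ∧
    (∀ x x' : Fin 6 → ℂ, SegreNoPlane x → SegreNoPlane x' →
      (∃ c : ℂ, c ≠ 0 ∧ delta x' = c • delta x) → ∃ c : ℂ, c ≠ 0 ∧ x' = c • x) ∧
    (∀ y : Fin 6 → ℂ, CRNoNodeHyp y →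
      ∃ x : Fin 6 → ℂ, SegreNoPlane x ∧ ∃ c : ℂ, c ≠ 0 ∧ y = c • delta x) := by
  refine ⟨fun x => crNoNodeHyp_delta, ?_, ?_, ?_⟩
  · rintro x _ - - ⟨c, hc, rfl⟩
    exact ⟨c ^ 2, pow_ne_zero 2 hc, delta_smul c x⟩
  · rintro x x' hx hx' ⟨c, hc, h⟩
    have h216 : (216 : ℂ) ≠ 0 := by norm_num
    have he := mul_ne_zero h216 (elemSymm_five_ne_zero hx)
    have he' := mul_ne_zero h216 (elemSymm_five_ne_zero hx')
    have hpolar := congrArg quarticPolar h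
    rw [quarticPolar_smul, quarticPolar_delta hx.2.1 hx.2.2.1,
      quarticPolar_delta hx'.2.1 hx'.2.2.1, smul_smul, ← eq_inv_smul_iff₀ he', smul_smul] at hpolar
    exact ⟨_, mul_ne_zero (inv_ne_zero he') (mul_ne_zero (pow_ne_zero 3 hc) he), hpolar⟩
  · intro y hy
    have hκ := mul_ne_zero (by norm_num : (6 : ℂ) ≠ 0) (quarticMultiplier_ne_zero hy)
    refine ⟨quarticPolar y, segreNoPlane_quarticPolar hy, _, inv_ne_zero hκ, ?_⟩
    rw [delta_quarticPolar hy.2.1 hy.2.2.1, inv_smul_smul₀ hκ]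
end
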